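/- arXiv:2209.14283 — 3 statements merged into one kernel-verified Lean document; each statement's English description precedes it below -/
import Mathlib

section
/- Let G be a directed acyclic graph on a finite vertex set V partitioned into disjoint nonempty sets 𝐗 and 𝐘, unidirectional from 𝐗 to 𝐘. If Yk, Yl ∈ 𝐘 are distinct and S ⊆ 𝐘 \ {Yk, Yl} d-separates Yk and Yl in G, then S ∪ 𝐗 also d-separates Yk and Yl in G. -/
open MeasureTheory ProbabilityTheory

namespace VecCI

variable {V : Type*}

/-- Undirected adjacency of the edge relation `E`. -/
def Adj (E : V → V → Prop) (u v : V) : Prop := E u v ∨ E v u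

/-- `p` is a path from `a` to `b`: a list of pairwise distinct vertices, starting at `a`,
ending at `b`, with at least two vertices, consecutive vertices being adjacent. -/
def IsPath (E : V → V → Prop) (p : List V) (a b : V) : Prop :=
  p.Nodup ∧ 2 ≤ p.length ∧ p.head? = some a ∧ p.getLast? = some b ∧ p.Chain' (Adj E)

/-- Index `i` is an interior position of the path `p`. -/
def Interior (p : List V) (i : ℕ) : Prop := 0 < i ∧ i + 1 < p.length

/-- The vertex at interior position `i` of `p` is a collider: both adjacent edges point into it. -/
def ColliderAt (E : V → V → Prop) (p : List V) (i : ℕ) : Prop :=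
  Interior p i ∧
    ∃ u v w, p[i - 1]? = some u ∧ p[i]? = some v ∧ p[i + 1]? = some w ∧ E u v ∧ E w v

/-- The vertex at interior position `i` of `p` is a non-collider. -/
def NonColliderAt (E : V → V → Prop) (p : List V) (i : ℕ) : Prop :=
  Interior p i ∧ ¬ ColliderAt E p i

/-- `d` is a descendant of `c`: `d = c` or there is a directed path from `c` to `d`. -/
def Descendant (E : V → V → Prop) (c d : V) : Prop := Relation.ReflTransGen E c d

/-- A set `S` blocks a path `p` if some interior non-collider of `p` lies in `S`, or some
collider of `p` has no descendant in `S`. -/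
def Blocked (E : V → V → Prop) (S : Set V) (p : List V) : Prop :=
  (∃ i v, NonColliderAt E p i ∧ p[i]? = some v ∧ v ∈ S) ∨
  (∃ i v, ColliderAt E p i ∧ p[i]? = some v ∧ ∀ d, Descendant E v d → d ∉ S)

/-- `S` d-separates `a` and `b`: every path between them is blocked by `S`. -/
def DSep (E : V → V → Prop) (S : Set V) (a b : V) : Prop :=
  ∀ p : List V, IsPath E p a b → Blocked E S p

/-- `E` admits no directed cycle. -/
def Acyclic (E : V → V → Prop) : Prop := ∀ v, ¬ Relation.TransGen E v v

/-- `E` has no edge from `Ys` to `Xs`. -/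
def Unidirectional (E : V → V → Prop) (Xs Ys : Set V) : Prop :=
  ∀ x ∈ Xs, ∀ y ∈ Ys, ¬ E y x

/-!
A path with endpoints outside `X` that meets `X` must enter it along some step `u, v` with `u ∉ X`
and `v ∈ X`; the edge cannot be `u → v`, so `v` is a non-collider and `X` itself blocks the path.
A path avoiding `X` stays blocked when `S` grows to `S ∪ X`, because the descendants of a collider
outside `X` never reach `X`.
-/

variable {E : V → V → Prop} {S X : Set V} {p : List V} {a b u v d : V} {i : ℕ}

theorem Unidirectional.notMem_of_descendant (hX : Unidirectional E X Xᶜ) (hv : v ∉ X)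
    (hd : Descendant E v d) : d ∉ X := by
  induction (hd : Relation.ReflTransGen E v d) with
  | refl => exact hv
  | tail _ hedge ih => exact fun hmem => hX _ hmem _ ih hedge

theorem exists_getElem?_notMem_succ_mem (hhead : p.head? = some a) (ha : a ∉ X)
    (hmeet : ∃ x ∈ p, x ∈ X) :
    ∃ i u v, p[i]? = some u ∧ p[i + 1]? = some v ∧ u ∉ X ∧ v ∈ X := by
  rw [List.head?_eq_getElem?] at hhead
  have hstart : ¬∃ x ∈ X, p[0]? = some x := by simpa [hhead] using ha
  have hlater : ∃ n : ℕ, ∃ x ∈ X, p[n]? = some x := by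
    obtain ⟨x, hxp, hxX⟩ := hmeet
    obtain ⟨n, hn⟩ := List.mem_iff_getElem?.mp hxp
    exact ⟨n, x, hxX, hn⟩
  obtain ⟨i, hout, v, hvX, hv⟩ := Nat.exists_not_and_succ_of_not_zero_of_exists hstart hlater
  have hi : i < p.length := Nat.lt_of_succ_lt (List.getElem?_eq_some_iff.mp hv).1
  have hu : p[i]? = some p[i] := List.getElem?_eq_getElem hi
  exact ⟨i, p[i], v, hu, hv, fun huX => hout ⟨_, huX, hu⟩, hvX⟩

theorem interior_succ_of_ne_getLast? (hlast : p.getLast? = some b) (hv : p[i + 1]? = some v)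
    (hvb : v ≠ b) : Interior p (i + 1) := by
  have hi : i + 1 < p.length := (List.getElem?_eq_some_iff.mp hv).1
  have hne_last : i + 1 ≠ p.length - 1 := by
    intro h
    rw [List.getLast?_eq_getElem?, ← h, hv] at hlast
    exact hvb (Option.some.inj hlast)
  exact ⟨i.succ_pos, by omega⟩

theorem nonColliderAt_succ_of_not_edge (hint : Interior p (i + 1)) (hu : p[i]? = some u)
    (hv : p[i + 1]? = some v) (huv : ¬E u v) : NonColliderAt E p (i + 1) := by
  refine ⟨hint, ?_⟩
  rintro ⟨-, u', v', w, hu', hv', -, hedge, -⟩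
  obtain rfl : u = u' := Option.some.inj (hu.symm.trans hu')
  obtain rfl : v = v' := Option.some.inj (hv.symm.trans hv')
  exact huv hedge

theorem IsPath.exists_nonColliderAt_mem (hp : IsPath E p a b) (hX : Unidirectional E X Xᶜ)
    (ha : a ∉ X) (hb : b ∉ X) (hmeet : ∃ x ∈ p, x ∈ X) :
    ∃ i v, NonColliderAt E p i ∧ p[i]? = some v ∧ v ∈ X := by
  obtain ⟨-, -, hhead, hlast, -⟩ := hp
  obtain ⟨i, u, v, hu, hv, huX, hvX⟩ := exists_getElem?_notMem_succ_mem hhead ha hmeet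
  have hint : Interior p (i + 1) :=
    interior_succ_of_ne_getLast? hlast hv (ne_of_mem_of_not_mem hvX hb)
  exact ⟨i + 1, v, nonColliderAt_succ_of_not_edge hint hu hv (hX v hvX u huX), hv, hvX⟩

theorem Blocked.union_of_forall_notMem (h : Blocked E S p) (hX : Unidirectional E X Xᶜ)
    (hp : ∀ x ∈ p, x ∉ X) : Blocked E (S ∪ X) p := by
  rcases h with ⟨i, v, hnon, hv, hvS⟩ | ⟨i, v, hcol, hv, hdesc⟩
  · exact Or.inl ⟨i, v, hnon, hv, Or.inl hvS⟩
  · have hvX : v ∉ X := hp v (List.mem_of_getElem? hv)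
    exact Or.inr ⟨i, v, hcol, hv, fun d hd =>
      not_or.mpr ⟨hdesc d hd, hX.notMem_of_descendant hvX hd⟩⟩

theorem stmt_1_general {V : Type*} {E : V → V → Prop} {S X : Set V} {a b : V}
    (hX : Unidirectional E X Xᶜ) (ha : a ∉ X) (hb : b ∉ X) (hsep : DSep E S a b) :
    DSep E (S ∪ X) a b := by
  intro p hp
  by_cases hmeet : ∃ x ∈ p, x ∈ X
  · obtain ⟨i, v, hnon, hv, hvX⟩ := hp.exists_nonColliderAt_mem hX ha hb hmeet
    exact Or.inl ⟨i, v, hnon, hv, Or.inr hvX⟩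
  · have havoid : ∀ x ∈ p, x ∉ X := fun x hxp hxX => hmeet ⟨x, hxp, hxX⟩
    exact (hsep p hp).union_of_forall_notMem hX havoid

/-- if `S ⊆ Ys \ {Yk, Yl}` d-separates `Yk, Yl ∈ Ys`, then `S ∪ Xs`
also d-separates them. -/
theorem stmt_1 {V : Type*} [Fintype V] (E : V → V → Prop) (Xs Ys : Set V)
    (hcover : Xs ∪ Ys = Set.univ) (hdisj : Disjoint Xs Ys)
    (hXne : Xs.Nonempty) (hYne : Ys.Nonempty)
    (hirr : Irreflexive E) (hacyc : Acyclic E)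
    (huni : Unidirectional E Xs Ys)
    (Yk Yl : V) (hYk : Yk ∈ Ys) (hYl : Yl ∈ Ys) (hne : Yk ≠ Yl)
    (S : Set V) (hS : S ⊆ Ys \ {Yk, Yl}) (hsep : DSep E S Yk Yl) :
    DSep E (S ∪ Xs) Yk Yl := by
  obtain rfl : Xsᶜ = Ys := (IsCompl.of_eq hdisj.eq_bot hcover).compl_eq
  exact stmt_1_general huni hYk hYl hsep

end VecCI
end

section
/- (Lemma 2, principle P2.) Let G be a directed acyclic graph on V = 𝐗 ∪ 𝐘, unidirectional from 𝐗 to 𝐘, and let the joint distribution of random variables (Z_v)_{v ∈ V} be Markov and faithful to G. Then there is no subset S ⊆ 𝐗 and no pair of distinct vertices Xi, Xj ∈ 𝐗 \ S such that Z_{Xi} and Z_{Xj} are conditionally dependent given σ((Z_s)_{s ∈ S}) but conditionally independent given σ((Z_s)_{s ∈ S ∪ 𝐘}). -/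
open MeasureTheory ProbabilityTheory

namespace VecCI

variable {V : Type*}

/-- The σ-algebra generated by the family of random variables `(Z s)_{s ∈ S}`. -/
def sigmaOf {Ω : Type*} (Z : V → Ω → ℝ) (S : Set V) : MeasurableSpace Ω :=
  ⨆ s ∈ S, MeasurableSpace.comap (Z s) inferInstance

/-- `Z a` and `Z b` are conditionally independent given the σ-algebra generated by
`(Z s)_{s ∈ S}` (for `S = ∅` this is conditioning on the trivial σ-algebra, i.e.
unconditional independence). -/
def CondIndepGiven {Ω : Type*} [mΩ : MeasurableSpace Ω] [StandardBorelSpace Ω]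
    (μ : Measure Ω) [IsFiniteMeasure μ] (Z : V → Ω → ℝ) (hZ : ∀ v, Measurable (Z v))
    (S : Set V) (a b : V) : Prop :=
  CondIndepFun (sigmaOf Z S) (iSup₂_le fun s _ => measurable_iff_comap_le.mp (hZ s))
    (Z a) (Z b) μ

/-- The joint distribution of `(Z v)_{v ∈ V}` is Markov and faithful to the graph `E`:
for all distinct `a`, `b` and every `S ⊆ V \ {a, b}`, `S` d-separates `a` and `b` in `E`
iff `Z a` and `Z b` are conditionally independent given `σ((Z s)_{s ∈ S})`. -/
def MarkovFaithful {Ω : Type*} [mΩ : MeasurableSpace Ω] [StandardBorelSpace Ω]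
    (E : V → V → Prop) (μ : Measure Ω) [IsFiniteMeasure μ]
    (Z : V → Ω → ℝ) (hZ : ∀ v, Measurable (Z v)) : Prop :=
  ∀ a b : V, a ≠ b → ∀ S : Set V, a ∉ S → b ∉ S →
    (DSep E S a b ↔ CondIndepGiven μ Z hZ S a b)

/-!
An active path given `S` between `a` and `b` stays among the ancestors of `{a, b} ∪ S`: leaving
an interior vertex along an outgoing edge and continuing in that direction, one follows a directed
path until it reaches either an endpoint or a collider, which has a descendant in `S`.
So conditioning additionally on non-ancestors of `{a, b} ∪ S` cannot block such a path. When all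
edges between the two groups point from `Xs` to `Ys`, no vertex of `Ys` is an ancestor of `Xs`.
-/

/-- The set `An(A)` of ancestors of `A`: the vertices with a descendant in `A`. Since a vertex is
its own descendant, `An(A)` contains `A`. -/
def Ancestors (E : V → V → Prop) (A : Set V) : Set V := {v | ∃ d ∈ A, Descendant E v d}

section Graph

variable {E : V → V → Prop} {A B S T Xs Ys : Set V} {p : List V} {a b u v : V}

theorem subset_ancestors : A ⊆ Ancestors E A :=
  fun v hv => ⟨v, hv, Relation.ReflTransGen.refl⟩

theorem ancestors_mono (hAB : A ⊆ B) : Ancestors E A ⊆ Ancestors E B :=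
  fun _ ⟨d, hd, hvd⟩ => ⟨d, hAB hd, hvd⟩

theorem mem_ancestors_of_edge (huv : E u v) (hv : v ∈ Ancestors E A) : u ∈ Ancestors E A :=
  let ⟨d, hd, hvd⟩ := hv
  ⟨d, hd, Relation.ReflTransGen.head huv hvd⟩

theorem Unidirectional.descendant_mem (huni : Unidirectional E Xs Ys)
    (hcover : Xs ∪ Ys = Set.univ) (hu : u ∈ Ys) (huv : Descendant E u v) : v ∈ Ys := by
  induction huv with
  | refl => exact hu
  | @tail y z _ hyz hy =>
    have hz : z ∈ Xs ∪ Ys := hcover ▸ Set.mem_univ z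
    exact hz.resolve_left fun hzX => huni z hzX y hy hyz

theorem Unidirectional.disjoint_ancestors (huni : Unidirectional E Xs Ys)
    (hcover : Xs ∪ Ys = Set.univ) (hdisj : Disjoint Xs Ys) (hA : A ⊆ Xs) :
    Disjoint (Ancestors E A) Ys :=
  Set.disjoint_left.mpr fun _ ⟨_, hd, hvd⟩ hv =>
    Set.disjoint_left.mp hdisj (hA hd) (huni.descendant_mem hcover hv hvd)

theorem IsPath.getElem_zero (hp : IsPath E p a b) (h : 0 < p.length) : p[0] = a := by
  obtain ⟨-, -, hhead, -, -⟩ := hp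
  simpa only [List.head?_eq_getElem?, List.getElem?_eq_getElem h, Option.some.injEq] using hhead

theorem IsPath.getElem_of_add_one_eq_length {i : ℕ} (hp : IsPath E p a b)
    (hi : i + 1 = p.length) : p[i] = b := by
  obtain ⟨-, -, -, hlast, -⟩ := hp
  obtain rfl : i = p.length - 1 := by omega
  rw [List.getLast?_eq_getElem?] at hlast
  exact (List.getElem?_eq_some_iff.mp hlast).2

theorem IsPath.adj_getElem {i : ℕ} (hp : IsPath E p a b) (hi : i + 1 < p.length) :
    Adj E p[i] p[i + 1] :=
  List.isChain_iff_getElem.mp hp.2.2.2.2 i hi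

theorem collider_mem_ancestors_of_not_blocked {i : ℕ} (hactive : ¬ Blocked E S p)
    (hi : i + 2 < p.length) (hleft : E p[i] p[i + 1]) (hright : E p[i + 2] p[i + 1]) :
    p[i + 1] ∈ Ancestors E S := by
  by_contra hnot
  have hcollider : ColliderAt E p (i + 1) :=
    ⟨⟨by omega, hi⟩, p[i], p[i + 1], p[i + 2], List.getElem?_eq_getElem _,
      List.getElem?_eq_getElem _, List.getElem?_eq_getElem _, hleft, hright⟩
  exact hactive <| Or.inr ⟨i + 1, p[i + 1], hcollider, List.getElem?_eq_getElem _,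
    fun d hd hdS => hnot ⟨d, hdS, hd⟩⟩

theorem IsPath.mem_ancestors_of_forward_edge {i : ℕ} (hp : IsPath E p a b)
    (hactive : ¬ Blocked E S p) (hi : i + 1 < p.length) (hedge : E p[i] p[i + 1]) :
    p[i + 1] ∈ Ancestors E (insert b S) := by
  by_cases hend : i + 2 = p.length
  · rw [hp.getElem_of_add_one_eq_length hend]
    exact subset_ancestors (Set.mem_insert b S)
  · have hi' : i + 2 < p.length := by omega
    rcases hp.adj_getElem hi' with hforward | hbackward
    · exact mem_ancestors_of_edge hforward (hp.mem_ancestors_of_forward_edge hactive hi' hforward)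
    · exact ancestors_mono (Set.subset_insert b S)
        (collider_mem_ancestors_of_not_blocked hactive hi' hedge hbackward)
termination_by p.length - i

theorem IsPath.mem_ancestors_of_backward_edge {i : ℕ} (hp : IsPath E p a b)
    (hactive : ¬ Blocked E S p) (hi : i + 1 < p.length) (hedge : E p[i + 1] p[i]) :
    p[i] ∈ Ancestors E (insert a S) := by
  induction i with
  | zero =>
    rw [hp.getElem_zero]
    exact subset_ancestors (Set.mem_insert a S)
  | succ i ih =>
    rcases hp.adj_getElem (i := i) (by omega) with hforward | hbackward
    · exact ancestors_mono (Set.subset_insert a S)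
        (collider_mem_ancestors_of_not_blocked hactive hi hforward hedge)
    · exact mem_ancestors_of_edge hbackward (ih (by omega) hbackward)

theorem IsPath.mem_ancestors_of_not_blocked (hp : IsPath E p a b) (hactive : ¬ Blocked E S p)
    (hv : v ∈ p) : v ∈ Ancestors E (insert a (insert b S)) := by
  obtain ⟨i, hi, rfl⟩ := List.getElem_of_mem hv
  cases i with
  | zero =>
    rw [hp.getElem_zero]
    exact subset_ancestors (Set.mem_insert a _)
  | succ i =>
    rcases hp.adj_getElem hi with hforward | hbackward
    · exact ancestors_mono (Set.subset_insert a _)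
        (hp.mem_ancestors_of_forward_edge hactive hi hforward)
    · exact mem_ancestors_of_edge hbackward <|
        ancestors_mono (Set.insert_subset_insert (Set.subset_insert b S))
          (hp.mem_ancestors_of_backward_edge hactive hi hbackward)

theorem IsPath.blocked_of_blocked_union (hp : IsPath E p a b)
    (hT : Disjoint (Ancestors E (insert a (insert b S))) T) (hblocked : Blocked E (S ∪ T) p) :
    Blocked E S p := by
  by_contra hactive
  rcases hblocked with ⟨i, v, hnoncollider, hv, hvS | hvT⟩ | ⟨i, v, hcollider, hv, hdesc⟩
  · exact hactive (Or.inl ⟨i, v, hnoncollider, hv, hvS⟩)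
  · have hvanc := hp.mem_ancestors_of_not_blocked hactive (List.mem_of_getElem? hv)
    exact Set.disjoint_left.mp hT hvanc hvT
  · exact hactive (Or.inr ⟨i, v, hcollider, hv, fun d hd hdS => hdesc d hd (Or.inl hdS)⟩)

theorem DSep.of_union (hT : Disjoint (Ancestors E (insert a (insert b S))) T)
    (hsep : DSep E (S ∪ T) a b) : DSep E S a b :=
  fun p hp => hp.blocked_of_blocked_union hT (hsep p hp)

end Graph

theorem stmt_5_general {E : V → V → Prop} {Ω : Type*} [MeasurableSpace Ω]
    [StandardBorelSpace Ω] {μ : Measure Ω} [IsFiniteMeasure μ] {Z : V → Ω → ℝ}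
    {hZ : ∀ v, Measurable (Z v)} (hMF : MarkovFaithful E μ Z hZ) {S T : Set V} {a b : V}
    (hab : a ≠ b) (ha : a ∉ S) (hb : b ∉ S)
    (hT : Disjoint (Ancestors E (insert a (insert b S))) T)
    (hind : CondIndepGiven μ Z hZ (S ∪ T) a b) : CondIndepGiven μ Z hZ S a b := by
  have hsub : insert a (insert b S) ⊆ Tᶜ := subset_ancestors.trans hT.subset_compl_right
  have haT : a ∉ T := hsub (Set.mem_insert a _)
  have hbT : b ∉ T := hsub (Set.mem_insert_of_mem a (Set.mem_insert b S))
  have hsep : DSep E (S ∪ T) a b :=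
    (hMF a b hab (S ∪ T) (not_or_intro ha haT) (not_or_intro hb hbT)).mpr hind
  exact (hMF a b hab S ha hb).mp (hsep.of_union hT)

/-- Lemma 2, principle P2: under Markov + faithfulness to a DAG
unidirectional from `Xs` to `Ys`, conditioning on the effect group `Ys` cannot delete
a conditional dependence within the cause group `Xs`. -/
theorem stmt_5 {V : Type*} [Fintype V] (E : V → V → Prop) (Xs Ys : Set V)
    (hcover : Xs ∪ Ys = Set.univ) (hdisj : Disjoint Xs Ys)
    (hXne : Xs.Nonempty) (hYne : Ys.Nonempty)
    (hirr : Irreflexive E) (hacyc : Acyclic E)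
    (huni : Unidirectional E Xs Ys)
    {Ω : Type*} [mΩ : MeasurableSpace Ω] [StandardBorelSpace Ω]
    (μ : Measure Ω) [IsProbabilityMeasure μ]
    (Z : V → Ω → ℝ) (hZ : ∀ v, Measurable (Z v))
    (hMF : MarkovFaithful E μ Z hZ) :
    ¬ ∃ (S : Set V) (Xi Xj : V), S ⊆ Xs ∧ Xi ∈ Xs \ S ∧ Xj ∈ Xs \ S ∧ Xi ≠ Xj ∧
      ¬ CondIndepGiven μ Z hZ S Xi Xj ∧ CondIndepGiven μ Z hZ (S ∪ Ys) Xi Xj := by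
  rintro ⟨S, Xi, Xj, hS, ⟨hi, hiS⟩, ⟨hj, hjS⟩, hne, hdep, hind⟩
  exact hdep <| stmt_5_general hMF hne hiS hjS (huni.disjoint_ancestors hcover hdisj <|
    Set.insert_subset hi (Set.insert_subset hj hS)) hind

end VecCI
end

section
/- (Theorem 2, part for Condition (C1).) Let G be a directed acyclic graph on V = 𝐗 ∪ 𝐘, unidirectional from 𝐗 to 𝐘, and assume the graphical form of Condition (C1): there exist distinct Xi, Xj ∈ 𝐗 and S ⊆ 𝐗 \ {Xi, Xj} such that S d-separates Xi and Xj but S ∪ 𝐘 does not d-separate Xi and Xj. Then d(𝐗|𝐘) := edgeDens(G_{𝐗|𝐘}) − edgeDens(G_𝐗) > 0. -/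
open MeasureTheory ProbabilityTheory

namespace VecCI

variable {V : Type*}

/-- The skeleton produced by an oracle PC algorithm run on the group `W`: the unordered
pair `{i, j}` of distinct vertices of `W` is an edge iff no `S ⊆ W \ {i, j}` d-separates
`i` and `j` in the full graph. -/
def EdgePlain (E : V → V → Prop) (W : Set V) : Set (Sym2 V) :=
  {e | ∃ i j : V, e = s(i, j) ∧ i ∈ W ∧ j ∈ W ∧ i ≠ j ∧
    ∀ S : Set V, S ⊆ W \ {i, j} → ¬ DSep E S i j}

/-- The skeleton produced by an oracle PC algorithm run on the group `W` with the other
group `C` added to every conditioning set: `{i, j}` is an edge iff there is no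
`S ⊆ W \ {i, j}` such that `S ∪ C` d-separates `i` and `j` in the full graph. -/
def EdgeCond (E : V → V → Prop) (W C : Set V) : Set (Sym2 V) :=
  {e | ∃ i j : V, e = s(i, j) ∧ i ∈ W ∧ j ∈ W ∧ i ≠ j ∧
    ∀ S : Set V, S ⊆ W \ {i, j} → ¬ DSep E (S ∪ C) i j}

/-- Edge density of an edge set `A` over a vertex group `W` with `n = |W|`:
`|A| / (n (n − 1) / 2)`. -/
noncomputable def edgeDens (A : Set (Sym2 V)) (W : Set V) : ℝ :=
  (A.ncard : ℝ) / ((W.ncard : ℝ) * ((W.ncard : ℝ) - 1) / 2)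

/-! Whether a path is active is decided by its consecutive triples. On a shortest active path, the
parents `u`, `w` of a collider `v` are not adjacent, since skipping `v` would leave the path active:
neither `u` nor `w` is a collider before the shortcut, and if one of them becomes a collider, it
inherits the conditioned descendant of `v`. If `S` separates the endpoints while `S ∪ 𝐘` does not,
a shortest active path given `S ∪ 𝐘` has a collider `v` with a descendant in `𝐘`. Its parents `u`,
`w` are outside `S ∪ 𝐘` or endpoints, hence in `𝐗`, and are joined in `G_{𝐗|𝐘}` by the path
`u → v ← w`, while in `G_𝐗` only adjacent vertices are joined, because nonadjacent ones are
separated by the parents of one of them. -/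

variable {E : V → V → Prop} {S T W : Set V} {a b u v w x : V} {p l r : List V}

lemma Acyclic.not_edge_of_edge (hac : Acyclic E) (huv : E u v) : ¬ E v u :=
  fun hvu => hac u (.tail (.single huv) hvu)

lemma Acyclic.ne_of_edge (hac : Acyclic E) (huv : E u v) : u ≠ v := by
  rintro rfl
  exact hac u (.single huv)

section ActivePath

/-- The consecutive vertices `u`, `v`, `w` of a path let information through given `S`: a collider
`v` has a descendant in `S`, and a non-collider `v` is not in `S`. -/
def ActiveTriple (E : V → V → Prop) (S : Set V) (u v w : V) : Prop :=
  (E u v ∧ E w v → ∃ d ∈ S, Descendant E v d) ∧ (¬(E u v ∧ E w v) → v ∉ S)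

/-- The path `p` is active (open) given `S`, i.e. not blocked by `S`. It is expressed through the
consecutive triples of `p` rather than through the positions of its interior vertices. -/
def ActivePath (E : V → V → Prop) (S : Set V) (p : List V) : Prop :=
  ∀ ⦃u v w⦄, [u, v, w] <:+: p → ActiveTriple E S u v w

lemma ActiveTriple.symm (h : ActiveTriple E S u v w) : ActiveTriple E S w v u :=
  ⟨fun hc => h.1 hc.symm, fun hc => h.2 fun hc' => hc hc'.symm⟩

lemma ActiveTriple.notMem_of_edge (hac : Acyclic E) (h : ActiveTriple E S x u v) (huv : E u v) :
    u ∉ S :=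
  h.2 fun hc => hac.not_edge_of_edge huv hc.2

lemma ActiveTriple.replace_child (hac : Acyclic E) (h : ActiveTriple E S x u v) (huv : E u v)
    (hv : ∃ d ∈ S, Descendant E v d) : ActiveTriple E S x u w :=
  ⟨fun _ => hv.imp fun _ hd => ⟨hd.1, .head huv hd.2⟩, fun _ => h.notMem_of_edge hac huv⟩

lemma triple_infix_iff_getElem? :
    [u, v, w] <:+: p ↔ ∃ k, p[k]? = some u ∧ p[k + 1]? = some v ∧ p[k + 2]? = some w := by
  rw [List.infix_iff_getElem?]
  refine exists_congr fun k => ⟨fun ⟨_, h⟩ => ?_, fun ⟨hu, hv, hw⟩ => ⟨?_, fun i hi => ?_⟩⟩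
  · exact ⟨by simpa using h 0, by simpa [add_comm] using h 1, by simpa [add_comm] using h 2⟩
  · have := (List.getElem?_eq_some_iff.1 hw).1
    simp only [List.length_cons, List.length_nil]
    omega
  · match i, hi with
    | 0, _ => simpa using hu
    | 1, _ => simpa [add_comm] using hv
    | 2, _ => simpa [add_comm] using hw

lemma colliderAt_iff_of_getElem? {k : ℕ} (hu : p[k]? = some u) (hv : p[k + 1]? = some v)
    (hw : p[k + 2]? = some w) : ColliderAt E p (k + 1) ↔ E u v ∧ E w v := by
  constructor
  · rintro ⟨-, u', v', w', hu', hv', hw', huv, hwv⟩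
    obtain rfl : u = u' := Option.some.inj (hu.symm.trans hu')
    obtain rfl : v = v' := Option.some.inj (hv.symm.trans hv')
    obtain rfl : w = w' := Option.some.inj (hw.symm.trans hw')
    exact ⟨huv, hwv⟩
  · rintro ⟨huv, hwv⟩
    have hlen := (List.getElem?_eq_some_iff.1 hw).1
    exact ⟨⟨k.succ_pos, hlen⟩, u, v, w, hu, hv, hw, huv, hwv⟩

lemma Interior.exists_triple {i : ℕ} (hi : Interior p i) :
    ∃ k u v w, i = k + 1 ∧ p[k]? = some u ∧ p[k + 1]? = some v ∧ p[k + 2]? = some w := by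
  obtain ⟨hpos, hlen⟩ := hi
  obtain ⟨k, rfl⟩ := Nat.exists_eq_succ_of_ne_zero hpos.ne'
  exact ⟨k, p[k], p[k + 1], p[k + 2], rfl, by simp⟩

lemma not_blocked_iff_activePath : ¬ Blocked E S p ↔ ActivePath E S p := by
  constructor
  · intro hnb u v w huvw
    obtain ⟨k, hu, hv, hw⟩ := triple_infix_iff_getElem?.1 huvw
    have hlen := (List.getElem?_eq_some_iff.1 hw).1
    have hcol := colliderAt_iff_of_getElem? (E := E) hu hv hw
    refine ⟨fun hc => ?_, fun hc hvS => ?_⟩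
    · by_contra! hd
      exact hnb (.inr ⟨k + 1, v, hcol.2 hc, hv, fun d hvd hdS => hd d hdS hvd⟩)
    · exact hnb (.inl ⟨k + 1, v, ⟨⟨k.succ_pos, hlen⟩, fun h => hc (hcol.1 h)⟩, hv, hvS⟩)
  · rintro hact (⟨i, v, ⟨hi, hc⟩, hv, hvS⟩ | ⟨i, v, hc, hv, hvS⟩)
    · obtain ⟨k, u, v', w, rfl, hu, hv', hw⟩ := hi.exists_triple
      obtain rfl : v = v' := Option.some.inj (hv.symm.trans hv')
      rw [colliderAt_iff_of_getElem? hu hv hw] at hc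
      exact (hact (triple_infix_iff_getElem?.2 ⟨k, hu, hv, hw⟩)).2 hc hvS
    · obtain ⟨k, u, v', w, rfl, hu, hv', hw⟩ := hc.1.exists_triple
      obtain rfl : v = v' := Option.some.inj (hv.symm.trans hv')
      rw [colliderAt_iff_of_getElem? hu hv hw] at hc
      obtain ⟨d, hdS, hvd⟩ := (hact (triple_infix_iff_getElem?.2 ⟨k, hu, hv, hw⟩)).1 hc
      exact hvS d hvd hdS

lemma not_dSep_iff_exists_activePath :
    ¬ DSep E S a b ↔ ∃ p, IsPath E p a b ∧ ActivePath E S p := by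
  simp only [DSep, not_forall, exists_prop, not_blocked_iff_activePath]

lemma ActivePath.reverse (h : ActivePath E S p) : ActivePath E S p.reverse :=
  fun _ _ _ huvw => (h (by simpa using List.reverse_infix.2 huvw)).symm

lemma IsPath.reverse (h : IsPath E p a b) : IsPath E p.reverse b a := by
  obtain ⟨hnodup, hlen, ha, hb, hchain⟩ := h
  exact ⟨List.nodup_reverse.2 hnodup, by simpa using hlen, by simpa using hb, by simpa using ha,
    List.isChain_reverse.2 (hchain.imp fun _ _ => Or.symm)⟩

lemma DSep.symm (h : DSep E S a b) : DSep E S b a := by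
  contrapose! h
  obtain ⟨p, hp, hact⟩ := not_dSep_iff_exists_activePath.1 h
  exact not_dSep_iff_exists_activePath.2 ⟨p.reverse, hp.reverse, hact.reverse⟩

lemma activePath_pair : ActivePath E S [u, v] :=
  fun _ _ _ h => absurd h.length_le (by simp)

lemma activePath_cons_cons_cons :
    ActivePath E S (u :: v :: w :: l) ↔ ActiveTriple E S u v w ∧ ActivePath E S (v :: w :: l) := by
  refine ⟨fun h => ⟨h ⟨[], l, rfl⟩, fun _ _ _ hl => h (List.infix_cons hl)⟩, ?_⟩
  rintro ⟨huvw, hl⟩ x y z hxyz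
  rcases List.infix_cons_iff.1 hxyz with hpre | hinf
  · simp only [List.cons_prefix_cons, List.nil_prefix, and_true] at hpre
    obtain ⟨rfl, rfl, rfl⟩ := hpre
    exact huvw
  · exact hl hinf

end ActivePath

section Adjacency

lemma not_dSep_of_adj (hne : u ≠ v) (hadj : Adj E u v) : ¬ DSep E S u v := by
  refine not_dSep_iff_exists_activePath.2 ⟨[u, v], ?_, activePath_pair⟩
  exact ⟨by simpa using hne, le_rfl, rfl, rfl, List.isChain_pair.2 hadj⟩

lemma not_dSep_of_collider (hac : Acyclic E) (huw : u ≠ w) (huv : E u v) (hwv : E w v)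
    (hv : ∃ d ∈ S, Descendant E v d) : ¬ DSep E S u w := by
  refine not_dSep_iff_exists_activePath.2 ⟨[u, v, w], ?_, activePath_cons_cons_cons.2 ⟨?_, ?_⟩⟩
  · exact ⟨by simp [huw, hac.ne_of_edge huv, (hac.ne_of_edge hwv).symm], by simp, rfl, rfl,
      List.isChain_cons_cons.2 ⟨.inl huv, List.isChain_pair.2 (.inr hwv)⟩⟩
  · exact ⟨fun _ => hv, fun hc => absurd ⟨huv, hwv⟩ hc⟩
  · exact activePath_pair

-- The first collider on the path would be a descendant of `a` with a descendant among the parents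
-- of `a`, so there is none and the path stays directed.
lemma ActivePath.transGen_of_parents (hac : Acyclic E) :
    ∀ {l : List V} {u v : V}, ActivePath E {x | E x a} (u :: v :: l) →
      (u :: v :: l).IsChain (Adj E) → E u v → Descendant E a u →
      (v :: l).getLast? = some b → Relation.TransGen E a b
  | [], u, v, _, _, huv, hau, hb => by
    obtain rfl : v = b := by simpa using hb
    exact .tail' hau huv
  | w :: l, u, v, hact, hchain, huv, hau, hb => by
    obtain ⟨huvw, hact⟩ := activePath_cons_cons_cons.1 hact
    have hav : Relation.TransGen E a v := .tail' hau huv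
    have hvw : E v w := by
      refine (List.isChain_cons_cons.1 hchain.tail).1.resolve_right fun hwv => ?_
      obtain ⟨d, hda, hvd⟩ := huvw.1 ⟨huv, hwv⟩
      exact hac a ((hav.trans_left hvd).tail hda)
    exact hact.transGen_of_parents hac hchain.tail hvw hav.to_reflTransGen (by simpa using hb)

lemma dSep_parents (hac : Acyclic E) (hadj : ¬ Adj E a b) (hab : ¬ Relation.TransGen E a b) :
    DSep E {x | E x a} a b := by
  by_contra hsep
  obtain ⟨p, ⟨-, hlen, ha, hb, hchain⟩, hact⟩ := not_dSep_iff_exists_activePath.1 hsep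
  match p, hlen with
  | c :: v :: l, _ =>
    obtain rfl : c = a := by simpa using ha
    rcases (List.isChain_cons_cons.1 hchain).1 with hcv | hvc
    · exact hab (hact.transGen_of_parents hac hchain hcv .refl (by simpa using hb))
    · cases l with
      | nil =>
        obtain rfl : v = b := by simpa using hb
        exact hadj (.inr hvc)
      | cons w l =>
        exact (activePath_cons_cons_cons.1 hact).1.symm.notMem_of_edge hac hvc hvc

/-- `W` is ancestral: it contains the parents, hence all the ancestors, of its elements. -/
def IsAncestral (E : V → V → Prop) (W : Set V) : Prop := ∀ ⦃u v⦄, E u v → v ∈ W → u ∈ W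

lemma Unidirectional.isAncestral {Xs Ys : Set V} (huni : Unidirectional E Xs Ys)
    (hcover : Xs ∪ Ys = Set.univ) : IsAncestral E Xs := fun u v huv hv =>
  (Set.eq_univ_iff_forall.1 hcover u).resolve_right fun hu => huni v hv u hu huv

lemma IsAncestral.parents_subset (hW : IsAncestral E W) (hac : Acyclic E) (ha : a ∈ W)
    (hadj : ¬ Adj E a b) : {x | E x a} ⊆ W \ {a, b} := by
  refine fun x hxa => ⟨hW hxa ha, ?_⟩
  rintro (rfl | rfl)
  · exact hac x (.single hxa)
  · exact hadj (.inr hxa)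

lemma IsAncestral.exists_dSep_of_not_adj (hW : IsAncestral E W) (hac : Acyclic E) (ha : a ∈ W)
    (hb : b ∈ W) (hadj : ¬ Adj E a b) : ∃ S ⊆ W \ {a, b}, DSep E S a b := by
  by_cases hab : Relation.TransGen E a b
  · have hba : ¬ Relation.TransGen E b a := fun hba => hac a (hab.trans hba)
    have hadj' : ¬ Adj E b a := fun h => hadj h.symm
    rw [Set.pair_comm]
    exact ⟨_, hW.parents_subset hac hb hadj', (dSep_parents hac hadj' hba).symm⟩
  · exact ⟨_, hW.parents_subset hac ha hadj, dSep_parents hac hadj hab⟩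

end Adjacency

section UnshieldedCollider

lemma ActivePath.eq_head_or_notMem_of_edge (hac : Acyclic E) (hact : ActivePath E S p)
    (ha : p.head? = some a) (hinf : [u, v] <:+: p) (huv : E u v) : u = a ∨ u ∉ S := by
  obtain ⟨s, t, rfl⟩ := hinf
  rcases s.eq_nil_or_concat' with rfl | ⟨s, x, rfl⟩
  · exact .inl (by simpa using ha)
  · exact .inr ((hact ⟨s, t, by simp⟩ : ActiveTriple E S x u v).notMem_of_edge hac huv)

lemma IsPath.shortcut (hp : IsPath E (l ++ u :: v :: w :: r) a b) (huw : Adj E u w) :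
    IsPath E (l ++ u :: w :: r) a b := by
  obtain ⟨hnodup, -, ha, hb, hchain⟩ := hp
  obtain ⟨hl, -, hr⟩ := List.isChain_append_cons_cons.1 hchain
  refine ⟨hnodup.sublist ?_, by simp; omega, ?_, by simpa using hb,
    List.isChain_append_cons_cons.2 ⟨hl, huw, hr.tail⟩⟩
  · exact (List.Sublist.refl l).append ((List.sublist_cons_self v _).cons_cons u)
  · simpa [List.head?_append] using ha

lemma ActivePath.shortcut (hac : Acyclic E) (h : ActivePath E S (l ++ u :: v :: w :: r))
    (huv : E u v) (hwv : E w v) : ActivePath E S (l ++ u :: w :: r) := by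
  have hv : ∃ d ∈ S, Descendant E v d :=
    (h ⟨l, r, by simp⟩ : ActiveTriple E S u v w).1 ⟨huv, hwv⟩
  induction l with
  | nil =>
    cases r with
    | nil => exact activePath_pair
    | cons t r =>
      simp only [List.nil_append, activePath_cons_cons_cons] at h ⊢
      exact ⟨(h.2.1.symm.replace_child hac hwv hv).symm, h.2.2⟩
  | cons s l ih =>
    rcases l with _ | ⟨t, _ | ⟨t', l⟩⟩ <;>
      simp only [List.nil_append, List.cons_append, activePath_cons_cons_cons (u := s)] at h ih ⊢
    · exact ⟨h.1.replace_child hac huv hv, ih h.2⟩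
    · exact ⟨h.1, ih h.2⟩
    · exact ⟨h.1, ih h.2⟩

lemma ActivePath.exists_collider_of_blocked (hact : ActivePath E (S ∪ T) p)
    (hblocked : Blocked E S p) :
    ∃ u v w, [u, v, w] <:+: p ∧ E u v ∧ E w v ∧ ∃ d ∈ T, Descendant E v d := by
  obtain ⟨u, v, w, huvw, hinactive⟩ :
      ∃ u v w, [u, v, w] <:+: p ∧ ¬ ActiveTriple E S u v w := by
    have := mt not_blocked_iff_activePath.2 (not_not_intro hblocked)
    simpa only [ActivePath, not_forall, exists_prop] using this
  obtain ⟨hcol, hncol⟩ := hact huvw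
  have hcollider : E u v ∧ E w v := by
    by_contra hc
    exact hinactive ⟨fun h => absurd h hc, fun _ hvS => hncol hc (.inl hvS)⟩
  obtain ⟨d, hd, hvd⟩ := hcol hcollider
  have hdT : d ∈ T := hd.resolve_left fun hdS =>
    hinactive ⟨fun _ => ⟨d, hdS, hvd⟩, fun hc => absurd hcollider hc⟩
  exact ⟨u, v, w, huvw, hcollider.1, hcollider.2, d, hdT, hvd⟩

lemma exists_unshielded_collider (hac : Acyclic E) (ha : a ∈ W) (hb : b ∈ W)
    (hW : (S ∪ T)ᶜ ⊆ W) (hsep : DSep E S a b) (hnsep : ¬ DSep E (S ∪ T) a b) :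
    ∃ u ∈ W, ∃ w ∈ W, u ≠ w ∧ ¬ Adj E u w ∧
      ∃ v, E u v ∧ E w v ∧ ∃ d ∈ T, Descendant E v d := by
  obtain ⟨p, ⟨hp, hact⟩, hmin⟩ := exists_minimalFor_of_wellFoundedLT _ List.length
    (not_dSep_iff_exists_activePath.1 hnsep)
  obtain ⟨u, v, w, huvw, huv, hwv, hv⟩ := hact.exists_collider_of_blocked (hsep p hp)
  have huW : u ∈ W := by
    have hinf : [u, v] <:+: p := .trans ⟨[], [w], rfl⟩ huvw
    rcases hact.eq_head_or_notMem_of_edge hac hp.2.2.1 hinf huv with rfl | hu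
    exacts [ha, hW hu]
  have hwW : w ∈ W := by
    have hinf : [v, w] <:+: p := .trans ⟨[u], [], rfl⟩ huvw
    have hinf : [w, v] <:+: p.reverse := by simpa using List.reverse_infix.2 hinf
    rcases hact.reverse.eq_head_or_notMem_of_edge hac hp.reverse.2.2.1 hinf hwv with rfl | hw
    exacts [hb, hW hw]
  have huw : u ≠ w := by
    rintro rfl
    simpa using hp.1.sublist huvw.sublist
  refine ⟨u, huW, w, hwW, huw, fun hadj => ?_, v, huv, hwv, hv⟩
  obtain ⟨l, r, rfl⟩ := huvw
  simp only [List.append_assoc, List.cons_append, List.nil_append] at hp hact hmin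
  have := hmin ⟨hp.shortcut hadj, hact.shortcut hac huv hwv⟩
  simp only [List.length_append, List.length_cons] at this
  omega

end UnshieldedCollider

section Skeleton

lemma IsAncestral.adj_of_mem_edgePlain (hW : IsAncestral E W) (hac : Acyclic E)
    (h : s(u, w) ∈ EdgePlain E W) : Adj E u w := by
  obtain ⟨i, j, huw, hi, hj, -, hnsep⟩ := h
  have hadj : Adj E i j := by
    by_contra hn
    obtain ⟨S, hS, hsep⟩ := hW.exists_dSep_of_not_adj hac hi hj hn
    exact hnsep S hS hsep
  rcases Sym2.eq_iff.1 huw with ⟨rfl, rfl⟩ | ⟨rfl, rfl⟩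
  exacts [hadj, hadj.symm]

lemma IsAncestral.edgePlain_subset_edgeCond (hW : IsAncestral E W) (hac : Acyclic E) :
    EdgePlain E W ⊆ EdgeCond E W T := by
  rintro _ ⟨i, j, rfl, hi, hj, hij, hnsep⟩
  have hadj : Adj E i j := hW.adj_of_mem_edgePlain hac ⟨i, j, rfl, hi, hj, hij, hnsep⟩
  exact ⟨i, j, rfl, hi, hj, hij, fun _ _ => not_dSep_of_adj hij hadj⟩

lemma mem_edgeCond_of_collider (hac : Acyclic E) (hu : u ∈ W) (hw : w ∈ W) (huw : u ≠ w)
    (huv : E u v) (hwv : E w v) (hv : ∃ d ∈ T, Descendant E v d) : s(u, w) ∈ EdgeCond E W T :=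
  ⟨u, w, rfl, hu, hw, huw, fun _ _ =>
    not_dSep_of_collider hac huw huv hwv (hv.imp fun _ hd => ⟨.inr hd.1, hd.2⟩)⟩

lemma finite_edgeCond (hW : W.Finite) : (EdgeCond E W T).Finite := by
  refine ((hW.prod hW).image fun q => s(q.1, q.2)).subset ?_
  rintro _ ⟨i, j, rfl, hi, hj, -⟩
  exact ⟨(i, j), ⟨hi, hj⟩, rfl⟩

lemma edgeDens_lt_edgeDens {A B : Set (Sym2 V)} (hW : 1 < W.ncard) (hB : B.Finite) (hAB : A ⊂ B) :
    edgeDens A W < edgeDens B W := by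
  have hcard : (A.ncard : ℝ) < B.ncard := mod_cast Set.ncard_lt_ncard hAB hB
  have hW' : (1 : ℝ) < W.ncard := mod_cast hW
  exact div_lt_div_of_pos_right hcard (by nlinarith)

theorem stmt_14_general {Xs Ys : Set V} (hfin : Xs.Finite) (hcover : Xs ∪ Ys = Set.univ)
    (hacyc : Acyclic E) (huni : Unidirectional E Xs Ys) {Xi Xj : V} (hXi : Xi ∈ Xs)
    (hXj : Xj ∈ Xs) (hsep : DSep E S Xi Xj) (hnsep : ¬ DSep E (S ∪ Ys) Xi Xj) :
    0 < edgeDens (EdgeCond E Xs Ys) Xs - edgeDens (EdgePlain E Xs) Xs := by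
  have hanc : IsAncestral E Xs := huni.isAncestral hcover
  have hcompl : (S ∪ Ys)ᶜ ⊆ Xs := fun x hx =>
    (Set.eq_univ_iff_forall.1 hcover x).resolve_right fun hxY => hx (.inr hxY)
  obtain ⟨u, hu, w, hw, huw, hadj, v, huv, hwv, hv⟩ :=
    exists_unshielded_collider hacyc hXi hXj hcompl hsep hnsep
  have hmem : s(u, w) ∈ EdgeCond E Xs Ys := mem_edgeCond_of_collider hacyc hu hw huw huv hwv hv
  have hnotMem : s(u, w) ∉ EdgePlain E Xs := fun h => hadj (hanc.adj_of_mem_edgePlain hacyc h)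
  have hssub : EdgePlain E Xs ⊂ EdgeCond E Xs Ys :=
    (Set.ssubset_iff_of_subset (hanc.edgePlain_subset_edgeCond hacyc)).2 ⟨_, hmem, hnotMem⟩
  have hcard : 1 < Xs.ncard := (Set.one_lt_ncard_iff hfin).2 ⟨u, w, hu, hw, huw⟩
  exact sub_pos.2 (edgeDens_lt_edgeDens hcard (finite_edgeCond hfin) hssub)

end Skeleton

/-- Theorem 2, part for Condition (C1): under the graphical form of (C1),
`d(X|Y) = edgeDens(G_{X|Y}) − edgeDens(G_X) > 0`. -/
theorem stmt_14 {V : Type*} [Fintype V] (E : V → V → Prop) (Xs Ys : Set V)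
    (hcover : Xs ∪ Ys = Set.univ) (hdisj : Disjoint Xs Ys)
    (hXne : Xs.Nonempty) (hYne : Ys.Nonempty)
    (hirr : Irreflexive E) (hacyc : Acyclic E)
    (huni : Unidirectional E Xs Ys)
    (Xi Xj : V) (hXi : Xi ∈ Xs) (hXj : Xj ∈ Xs) (hne : Xi ≠ Xj)
    (S : Set V) (hS : S ⊆ Xs \ {Xi, Xj})
    (hsep : DSep E S Xi Xj) (hnsep : ¬ DSep E (S ∪ Ys) Xi Xj) :
    0 < edgeDens (EdgeCond E Xs Ys) Xs - edgeDens (EdgePlain E Xs) Xs :=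
  stmt_14_general (Set.toFinite Xs) hcover hacyc huni hXi hXj hsep hnsep

end VecCI
end
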